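/- For any training set S of points in X × {−1,1}, any probability distribution D over X × {−1,1}, any w ∈ H, and any margin γ ≥ γ_i (with k at least a sufficiently large constant and c_γ sufficiently small), the following four inequalities hold: (1) E_{A,t}[ Pr_{(x,y)∼D}[ y⟨h_{A,t}(w), Ax⟩ > γ_i/2 ∧ y⟨w,x⟩ ≤ 0 ] ] ≤ E_{(x,y)∼D}[φ(y⟨w,x⟩)]; (2) E_{A,t}[ Pr_{(x,y)∼S}[ y⟨h_{A,t}(w), Ax⟩ > γ_i/2 ∧ y⟨w,x⟩ ≤ γ ] ] ≥ E_{(x,y)∼S}[φ(y⟨w,x⟩)]; (3) E_{A,t}[ Pr_{(x,y)∼S}[ y⟨h_{A,t}(w), Ax⟩ ≤ γ_i/2 ∧ y⟨w,x⟩ > γ ] ] ≤ E_{(x,y)∼S}[ρ(y⟨w,x⟩)]; (4) E_{A,t}[ Pr_{(x,y)∼D}[ y⟨h_{A,t}(w), Ax⟩ ≤ γ_i/2 ∧ y⟨w,x⟩ > 0 ] ] ≥ E_{(x,y)∼D}[ρ(y⟨w,x⟩)]. -/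

import Mathlib

open MeasureTheory ProbabilityTheory

noncomputable section

/-- Dot product on `Fin m → ℝ`. -/
def dotp {m : ℕ} (w x : Fin m → ℝ) : ℝ := ∑ j, w j * x j

/-- Margin loss `L_D^γ(w)` of `w` under a distribution `D` on `ℝ^m × ℝ`
(labels are encoded as reals in `{-1,1}`). -/
def lossD {m : ℕ} (D : Measure ((Fin m → ℝ) × ℝ)) (γ : ℝ) (w : Fin m → ℝ) : ℝ :=
  (D {p | p.2 * dotp w p.1 ≤ γ}).toReal

/-- Empirical margin loss `L_S^γ(w)` on a training set `S` of `n` labeled points. -/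
def lossS {m n : ℕ} (S : Fin n → (Fin m → ℝ) × ℝ) (γ : ℝ) (w : Fin m → ℝ) : ℝ :=
  (Nat.card {i : Fin n // (S i).2 * dotp w (S i).1 ≤ γ} : ℝ) / n

/-- The i.i.d. sample measure `D^n` over training sets of size `n`. -/
def trainM {m : ℕ} (D : Measure ((Fin m → ℝ) × ℝ)) (n : ℕ) :
    Measure (Fin n → (Fin m → ℝ) × ℝ) := Measure.pi fun _ => D

/-- Spacing of the rounding grid: `(10 √k)⁻¹`. -/
def gridStep (k : ℕ) : ℝ := (10 * Real.sqrt k)⁻¹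

/-- The largest grid point `(1/2)(10√k)⁻¹ + z(10√k)⁻¹ ≤ g`. -/
def roundDown (k : ℕ) (g : ℝ) : ℝ :=
  gridStep k / 2 + (⌊(g - gridStep k / 2) / gridStep k⌋ : ℝ) * gridStep k

/-- The probability `p(z)` of rounding `g` down, chosen so the rounding is unbiased. -/
def roundProb (k : ℕ) (g : ℝ) : ℝ := 1 - (g - roundDown k g) / gridStep k

/-- Matrix-vector product, `(Aw)_i = ∑ j A i j * w j`. -/
def matVec {k m : ℕ} (A : Fin k → Fin m → ℝ) (w : Fin m → ℝ) : Fin k → ℝ :=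
  fun i => ∑ j, A i j * w j

/-- The randomized rounding `h_{A,t}(w)` of `Aw` to the grid. -/
def hRound {k m : ℕ} (A : Fin k → Fin m → ℝ) (t : Fin k → ℝ) (w : Fin m → ℝ) :
    Fin k → ℝ :=
  fun i => if t i ≤ roundProb k (matVec A w i)
    then roundDown k (matVec A w i)
    else roundDown k (matVec A w i) + gridStep k

/-- The joint law of `(A, t)`: `A` has i.i.d. `N(0,1/k)` entries and `t` has i.i.d.
uniform `[0,1]` coordinates, independent of `A`. -/
def roundMeasure (k m : ℕ) : Measure ((Fin k → Fin m → ℝ) × (Fin k → ℝ)) :=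
  (Measure.pi fun _ : Fin k => Measure.pi fun _ : Fin m =>
      gaussianReal 0 (k : NNReal)⁻¹).prod
    (Measure.pi fun _ : Fin k => volume.restrict (Set.Icc (0 : ℝ) 1))

/-- Reduced setup: the data domain `X ⊆ S^d ⊂ ℝ^{d+1}` of unit vectors whose first
`d` coordinates have norm at most `cγ`. -/
def Xset (d : ℕ) (cγ : ℝ) : Set (Fin (d+1) → ℝ) :=
  {x | (∑ j, x j ^ 2) = 1 ∧ (∑ j : Fin d, x j.castSucc ^ 2) ≤ cγ ^ 2}

/-- Reduced setup: the hypothesis class `H = S^{d-1} × {0} ⊂ ℝ^{d+1}`. -/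
def Hset (d : ℕ) : Set (Fin (d+1) → ℝ) :=
  {w | (∑ j, w j ^ 2) = 1 ∧ w (Fin.last d) = 0}

/-- `γ_i = 2^{i-1} n^{-1/2}`. -/
def γlo (n i : ℕ) : ℝ := 2 ^ (i - 1) / Real.sqrt n

/-- `γ_{i+1} = 2^i n^{-1/2}`. -/
def γhi (n i : ℕ) : ℝ := 2 ^ i / Real.sqrt n

/-- `ℓ_{j+1} = 2^j n^{-1}`. -/
def ellhi (n j : ℕ) : ℝ := 2 ^ j / n

/-- The interval `L_j`: `L_0 = [0, n⁻¹]`, and `L_j = (2^{j-1}/n, 2^j/n]` for `j ≥ 1`. -/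
def Lset (n j : ℕ) : Set ℝ :=
  if j = 0 then Set.Icc 0 (n : ℝ)⁻¹
  else Set.Ioc ((2 : ℝ) ^ (j - 1) / n) ((2 : ℝ) ^ j / n)

/-- Margin loss of `h ∈ ℝ^k` under the pushforward distribution `A·D`. -/
def kLossD {k m : ℕ} (D : Measure ((Fin m → ℝ) × ℝ)) (γ : ℝ) (h : Fin k → ℝ)
    (A : Fin k → Fin m → ℝ) : ℝ :=
  (D {q | q.2 * (∑ r, h r * ∑ s, A r s * q.1 s) ≤ γ}).toReal

/-- Empirical margin loss of `h ∈ ℝ^k` on the transformed training set `A·S`. -/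
def kLossS {k m n : ℕ} (S : Fin n → (Fin m → ℝ) × ℝ) (γ : ℝ) (h : Fin k → ℝ)
    (A : Fin k → Fin m → ℝ) : ℝ :=
  (Nat.card {i : Fin n // (S i).2 * (∑ r, h r * ∑ s, A r s * (S i).1 s) ≤ γ} : ℝ) / n

/-- Specification of the function `φ` from the paper, for margin parameter `γi`:
on `[-cγ, 0]` it equals the probability (over the randomized rounding) that the rounded
margin exceeds `γi/2` given original margin `α`; on `(0, γi]` it interpolates linearly to
`0`; on `(γi, cγ]` it is `0`. -/
def phiSpec (d k : ℕ) (cγ γi : ℝ) (φ : ℝ → ℝ) : Prop :=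
  (∀ (w x : Fin (d+1) → ℝ) (y : ℝ), w ∈ Hset d → x ∈ Xset d cγ →
      (y = 1 ∨ y = -1) → y * dotp w x ≤ 0 →
      φ (y * dotp w x) =
        (roundMeasure k (d+1)
          {p | γi / 2 < y * ∑ r, hRound p.1 p.2 w r * ∑ s, p.1 r s * x s}).toReal) ∧
  (∀ α : ℝ, 0 < α → α ≤ γi → φ α = ((γi - α) / γi) * φ 0) ∧
  (∀ α : ℝ, γi < α → α ≤ cγ → φ α = 0)

/-- Specification of the function `ρ` from the paper, for margin parameter `γi`. -/
def rhoSpec (d k : ℕ) (cγ γi : ℝ) (ρ : ℝ → ℝ) : Prop :=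
  (∀ (w x : Fin (d+1) → ℝ) (y : ℝ), w ∈ Hset d → x ∈ Xset d cγ →
      (y = 1 ∨ y = -1) → γi < y * dotp w x →
      ρ (y * dotp w x) =
        (roundMeasure k (d+1)
          {p | y * ∑ r, hRound p.1 p.2 w r * ∑ s, p.1 r s * x s ≤ γi / 2}).toReal) ∧
  (∀ α : ℝ, 0 < α → α ≤ γi →
      ∀ (w x : Fin (d+1) → ℝ) (y : ℝ), w ∈ Hset d → x ∈ Xset d cγ →
      (y = 1 ∨ y = -1) → y * dotp w x = γi →
      ρ α = (α / γi) *
        (roundMeasure k (d+1)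
          {p | y * ∑ r, hRound p.1 p.2 w r * ∑ s, p.1 r s * x s ≤ γi / 2}).toReal) ∧
  (∀ α : ℝ, -cγ ≤ α → α ≤ 0 → ρ α = 0)

theorem integral_cexp_sum_pi_gaussianReal {m : ℕ} (σ : NNReal) (v : Fin m → ℝ) :
    ∫ a, Complex.exp (((∑ j, v j * a j : ℝ) : ℂ) * Complex.I)
        ∂(Measure.pi fun _ : Fin m => gaussianReal 0 σ) =
      Complex.exp (-((σ * ∑ j, v j ^ 2 : ℝ) : ℂ) / 2) := by
  have h : ∀ a : Fin m → ℝ, Complex.exp (((∑ j, v j * a j : ℝ) : ℂ) * Complex.I) =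
      ∏ j, Complex.exp (v j * a j * Complex.I) := by
    intro a
    rw [← Complex.exp_sum]
    push_cast
    rw [Finset.sum_mul]
  simp_rw [h]
  rw [integral_fintype_prod_eq_prod (fun j (x : ℝ) => Complex.exp (v j * x * Complex.I))]
  have h2 : ∀ j, ∫ x : ℝ, Complex.exp (v j * x * Complex.I) ∂(gaussianReal 0 σ) =
      Complex.exp (-(σ * (v j : ℂ) ^ 2) / 2) := by
    intro j
    rw [← charFun_apply_real, charFun_gaussianReal]
    congr 1
    push_cast
    ring
  simp_rw [h2]
  rw [← Complex.exp_sum]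
  congr 1
  push_cast
  rw [Finset.mul_sum, ← Finset.sum_div, Finset.sum_neg_distrib]

theorem map_sum_pi_gaussianReal {m : ℕ} (σ τ : NNReal) (v : Fin m → ℝ)
    (hτ : (τ : ℝ) = σ * ∑ j, v j ^ 2) :
    (Measure.pi fun _ : Fin m => gaussianReal 0 σ).map (fun a => ∑ j, v j * a j) =
      gaussianReal 0 τ := by
  have hmeas : Measurable (fun a : Fin m → ℝ => ∑ j, v j * a j) := by fun_prop
  have := Measure.isProbabilityMeasure_map
    (μ := Measure.pi fun _ : Fin m => gaussianReal 0 σ) hmeas.aemeasurable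
  refine Measure.ext_of_charFun (funext fun t => ?_)
  rw [charFun_apply_real, charFun_gaussianReal, integral_map hmeas.aemeasurable (by fun_prop)]
  have h := integral_cexp_sum_pi_gaussianReal σ (fun j => t * v j)
  simp_rw [mul_assoc t, ← Finset.mul_sum] at h
  simp only [Complex.ofReal_mul t] at h
  rw [h]
  congr 1
  simp_rw [mul_pow, ← Finset.mul_sum]
  rw [show (τ : ℂ) = ((τ : ℝ) : ℂ) from rfl, hτ]
  push_cast
  ring

theorem map_pair_pi_gaussianReal {m : ℕ} (σ τ₁ τ₂ : NNReal) (w u : Fin m → ℝ)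
    (h₁ : (τ₁ : ℝ) = σ * ∑ j, w j ^ 2) (h₂ : (τ₂ : ℝ) = σ * ∑ j, u j ^ 2)
    (hwu : ∑ j, w j * u j = 0) :
    (Measure.pi fun _ : Fin m => gaussianReal 0 σ).map
        (fun a => (∑ j, w j * a j, ∑ j, u j * a j)) =
      (gaussianReal 0 τ₁).prod (gaussianReal 0 τ₂) := by
  have hmeas : Measurable (fun a : Fin m → ℝ => (∑ j, w j * a j, ∑ j, u j * a j)) := by fun_prop
  have := Measure.isProbabilityMeasure_map
    (μ := Measure.pi fun _ : Fin m => gaussianReal 0 σ) hmeas.aemeasurable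
  refine Measure.ext_of_charFunDual (funext fun L => ?_)
  obtain ⟨b, c, hL⟩ : ∃ b c : ℝ, ∀ p : ℝ × ℝ, L p = b * p.1 + c * p.2 := by
    refine ⟨L (1, 0), L (0, 1), fun p => ?_⟩
    have : p = p.1 • ((1 : ℝ), (0 : ℝ)) + p.2 • ((0 : ℝ), (1 : ℝ)) := by ext <;> simp
    conv_lhs => rw [this, map_add, map_smul, map_smul]
    simp only [smul_eq_mul]
    ring
  rw [charFunDual_apply, charFunDual_apply, integral_map hmeas.aemeasurable (by fun_prop)]
  simp_rw [hL]
  have h := integral_cexp_sum_pi_gaussianReal σ (fun j => b * w j + c * u j)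
  have e : ∀ a : Fin m → ℝ, ∑ j, (b * w j + c * u j) * a j =
      b * ∑ j, w j * a j + c * ∑ j, u j * a j := by
    intro a
    rw [Finset.mul_sum, Finset.mul_sum, ← Finset.sum_add_distrib]
    exact Finset.sum_congr rfl fun j _ => by ring
  simp_rw [e] at h
  rw [h]
  have e2 : ∀ p : ℝ × ℝ,
      Complex.exp (((b * p.1 + c * p.2 : ℝ) : ℂ) * Complex.I) =
      Complex.exp ((b : ℂ) * p.1 * Complex.I) *
        Complex.exp ((c : ℂ) * p.2 * Complex.I) := by
    intro p
    rw [← Complex.exp_add]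
    push_cast
    ring_nf
  simp_rw [e2]
  rw [integral_prod_mul (fun x : ℝ => Complex.exp ((b : ℂ) * x * Complex.I))
    (fun x : ℝ => Complex.exp ((c : ℂ) * x * Complex.I)),
    ← charFun_apply_real, ← charFun_apply_real, charFun_gaussianReal, charFun_gaussianReal,
    ← Complex.exp_add]
  congr 1
  have e3 : ∑ j, (b * w j + c * u j) ^ 2 =
      b ^ 2 * ∑ j, w j ^ 2 + c ^ 2 * ∑ j, u j ^ 2 := by
    have : ∑ j, (b * w j + c * u j) ^ 2 =
      b ^ 2 * ∑ j, w j ^ 2 + c ^ 2 * ∑ j, u j ^ 2 +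
        2 * b * c * ∑ j, w j * u j := by
      simp only [Finset.mul_sum, ← Finset.sum_add_distrib]
      exact Finset.sum_congr rfl fun j _ => by ring
    rw [this, hwu]; ring
  rw [e3, show (τ₁ : ℂ) = ((τ₁ : ℝ) : ℂ) from rfl, h₁, show (τ₂ : ℂ) = ((τ₂ : ℝ) : ℂ) from rfl, h₂]
  push_cast
  ring

theorem map_matVec_pair {k m : ℕ} (σ τ₁ τ₂ : NNReal) (w u : Fin m → ℝ)
    (h₁ : (τ₁ : ℝ) = σ * ∑ j, w j ^ 2) (h₂ : (τ₂ : ℝ) = σ * ∑ j, u j ^ 2)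
    (hwu : ∑ j, w j * u j = 0) :
    (Measure.pi fun _ : Fin k => Measure.pi fun _ : Fin m => gaussianReal 0 σ).map
        (fun A => (matVec A w, matVec A u)) =
      (Measure.pi fun _ : Fin k => gaussianReal 0 τ₁).prod
        (Measure.pi fun _ : Fin k => gaussianReal 0 τ₂) := by
  have hrow := map_pair_pi_gaussianReal σ τ₁ τ₂ w u h₁ h₂ hwu
  have hmeas : Measurable (fun a : Fin m → ℝ => (∑ j, w j * a j, ∑ j, u j * a j)) := by fun_prop
  have hpi := Measure.pi_map_pi (μ := fun _ : Fin k => Measure.pi fun _ : Fin m => gaussianReal 0 σ)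
    (f := fun _ a => (∑ j, w j * a j, ∑ j, u j * a j)) (fun _ => hmeas.aemeasurable)
  rw [hrow] at hpi
  rw [← (measurePreserving_arrowProdEquivProdArrow ℝ ℝ (Fin k) (fun _ => gaussianReal 0 τ₁)
    (fun _ => gaussianReal 0 τ₂)).map_eq, ← hpi, Measure.map_map (by fun_prop) (by fun_prop)]
  congr 1
  funext A
  refine Prod.ext (funext fun i => ?_) (funext fun i => ?_) <;>
    simp [matVec, MeasurableEquiv.arrowProdEquivProdArrow, Equiv.arrowProdEquivProdArrow, mul_comm]

theorem gaussianReal_Ioi_scale (v : NNReal) (s c : ℝ) (hs : 0 < s) (hv : (v : ℝ) = s ^ 2) :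
    gaussianReal 0 v (Set.Ioi c) = gaussianReal 0 1 (Set.Ioi (c / s)) := by
  have h := gaussianReal_map_const_mul (μ := 0) (v := 1) s
  have e : (NNReal.mk (s ^ 2) (sq_nonneg s)) * 1 = v := by
    ext; simp [hv]
  rw [mul_zero, e] at h
  rw [← h, Measure.map_apply (by fun_prop) measurableSet_Ioi]
  congr 1
  ext x
  simp [div_lt_iff₀ hs, mul_comm]

/-- Randomized rounding of a vector `g` to the grid. -/
def roundVec {k : ℕ} (g t : Fin k → ℝ) : Fin k → ℝ :=
  fun i => if t i ≤ roundProb k (g i) then roundDown k (g i) else roundDown k (g i) + gridStep k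

theorem hRound_eq_roundVec {k m : ℕ} (A : Fin k → Fin m → ℝ) (t : Fin k → ℝ) (w : Fin m → ℝ) :
    hRound A t w = roundVec (matVec A w) t := rfl

theorem gridStep_pos {k : ℕ} (hk : 0 < k) : 0 < gridStep k := by
  have : (0 : ℝ) < k := by exact_mod_cast hk
  unfold gridStep
  positivity

theorem measurable_roundDown (k : ℕ) : Measurable (roundDown k) := by
  unfold roundDown
  fun_prop

theorem measurable_roundProb (k : ℕ) : Measurable (roundProb k) := by
  have := measurable_roundDown k
  unfold roundProb
  fun_prop

theorem measurable_roundVec (k : ℕ) :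
    Measurable (fun p : (Fin k → ℝ) × (Fin k → ℝ) => roundVec p.1 p.2) := by
  have h₁ := measurable_roundDown k
  have h₂ := measurable_roundProb k
  refine measurable_pi_lambda _ fun i => ?_
  unfold roundVec
  refine Measurable.ite (measurableSet_le (by fun_prop) (by fun_prop)) (by fun_prop) (by fun_prop)

theorem measurable_matVec {k m : ℕ} (w : Fin m → ℝ) :
    Measurable (fun A : Fin k → Fin m → ℝ => matVec A w) := by
  unfold matVec
  fun_prop

theorem roundDown_le {k : ℕ} (hk : 0 < k) (g : ℝ) : roundDown k g ≤ g := by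
  have h := gridStep_pos hk
  have := Int.floor_le ((g - gridStep k / 2) / gridStep k)
  rw [le_div_iff₀ h] at this
  unfold roundDown
  linarith

theorem lt_roundDown_add {k : ℕ} (hk : 0 < k) (g : ℝ) : g < roundDown k g + gridStep k := by
  have h := gridStep_pos hk
  have := Int.lt_floor_add_one ((g - gridStep k / 2) / gridStep k)
  rw [div_lt_iff₀ h] at this
  unfold roundDown
  linarith

theorem sq_roundVec_sub_le {k : ℕ} (hk : 0 < k) (g t : Fin k → ℝ) (i : Fin k) :
    (roundVec g t i - g i) ^ 2 ≤ gridStep k ^ 2 := by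
  have h := gridStep_pos hk
  have h₁ := roundDown_le hk (g i)
  have h₂ := lt_roundDown_add hk (g i)
  refine sq_le_sq' ?_ ?_ <;> unfold roundVec <;> split_ifs <;> linarith

theorem sq_half_step_le (s : ℝ) (z : ℤ) : (s / 2) ^ 2 ≤ (s / 2 + z * s) ^ 2 := by
  have hz : (0 : ℝ) ≤ z * (z + 1) := by
    have : (0 : ℤ) ≤ z * (z + 1) := by
      rcases le_or_gt 0 z with h | h
      · positivity
      · nlinarith
    exact_mod_cast this
  nlinarith [mul_nonneg (sq_nonneg s) hz]

theorem gridStep_le_sq_roundVec {k : ℕ} (g t : Fin k → ℝ) (i : Fin k) :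
    (gridStep k / 2) ^ 2 ≤ roundVec g t i ^ 2 := by
  unfold roundVec roundDown
  split_ifs
  · exact sq_half_step_le (gridStep k) _
  · have := sq_half_step_le (gridStep k) (⌊(g i - gridStep k / 2) / gridStep k⌋ + 1)
    push_cast at this
    convert this using 2
    ring

theorem natCast_mul_gridStep_sq {k : ℕ} (hk : 0 < k) : (k : ℝ) * gridStep k ^ 2 = 1 / 100 := by
  have : (0 : ℝ) < k := by exact_mod_cast hk
  unfold gridStep
  rw [inv_pow, mul_pow, Real.sq_sqrt this.le]
  field_simp
  norm_num

theorem sum_sq_roundVec_sub_le {k : ℕ} (hk : 0 < k) (g t : Fin k → ℝ) :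
    ∑ i, (roundVec g t i - g i) ^ 2 ≤ 1 / 100 := by
  calc _ ≤ ∑ _i : Fin k, gridStep k ^ 2 := Finset.sum_le_sum fun i _ => sq_roundVec_sub_le hk g t i
    _ = _ := by simp [natCast_mul_gridStep_sq hk]

theorem le_sum_sq_roundVec {k : ℕ} (hk : 0 < k) (g t : Fin k → ℝ) :
    1 / 400 ≤ ∑ i, roundVec g t i ^ 2 := by
  calc _ = ∑ _i : Fin k, (gridStep k / 2) ^ 2 := by
        have := natCast_mul_gridStep_sq hk
        simp only [Finset.sum_const, Finset.card_univ, Fintype.card_fin, nsmul_eq_mul]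
        linarith
    _ ≤ _ := Finset.sum_le_sum fun i _ => gridStep_le_sq_roundVec g t i

/-- The joint law of the projected hypothesis `Aw` (for a unit vector `w`) and of `t`. -/
def projMeasure (k : ℕ) : Measure ((Fin k → ℝ) × (Fin k → ℝ)) :=
  (Measure.pi fun _ : Fin k => gaussianReal 0 (k : NNReal)⁻¹).prod
    (Measure.pi fun _ : Fin k => volume.restrict (Set.Icc (0 : ℝ) 1))

instance : IsProbabilityMeasure (volume.restrict (Set.Icc (0 : ℝ) 1)) :=
  ⟨by simp⟩

instance (k : ℕ) : IsProbabilityMeasure (projMeasure k) := by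
  unfold projMeasure
  infer_instance

instance (k m : ℕ) : IsProbabilityMeasure (roundMeasure k m) := by
  unfold roundMeasure
  infer_instance

/-- Upper tail of the standard normal distribution. -/
def stdTail (z : ℝ) : ℝ := (gaussianReal 0 1 (Set.Ioi z)).toReal

/-- The standardized threshold of the rounded margin conditionally on `(Aw, t) = p`. -/
def threshold {k : ℕ} (γ α : ℝ) (p : (Fin k → ℝ) × (Fin k → ℝ)) : ℝ :=
  (γ / 2 - α * ∑ i, roundVec p.1 p.2 i * p.1 i) /
    √((k : ℝ)⁻¹ * (1 - α ^ 2) * ∑ i, roundVec p.1 p.2 i ^ 2)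

/-- Probability that the rounded margin exceeds `γ / 2` given the original margin `α`. -/
def tailProb (k : ℕ) (γ α : ℝ) : ℝ := ∫ p, stdTail (threshold γ α p) ∂(projMeasure k)

theorem antitone_gaussianReal_Ioi : Antitone fun z : ℝ => gaussianReal 0 1 (Set.Ioi z) :=
  fun _ _ h => measure_mono (Set.Ioi_subset_Ioi h)

theorem measurable_threshold {k : ℕ} (γ α : ℝ) : Measurable (threshold (k := k) γ α) := by
  have h := measurable_roundVec k
  have h' : ∀ i, Measurable fun p : (Fin k → ℝ) × (Fin k → ℝ) => roundVec p.1 p.2 i :=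
    fun i => (measurable_pi_apply i).comp h
  unfold threshold
  fun_prop

theorem tailProb_eq_lintegral (k : ℕ) (γ α : ℝ) :
    tailProb k γ α = (∫⁻ p, gaussianReal 0 1 (Set.Ioi (threshold γ α p)) ∂(projMeasure k)).toReal :=
  integral_toReal (antitone_gaussianReal_Ioi.measurable.comp (measurable_threshold γ α)).aemeasurable
    (Filter.Eventually.of_forall fun _ => measure_lt_top _ _)

theorem measure_margin {k m : ℕ} (hk : 0 < k) (γ y : ℝ) (hy : y = 1 ∨ y = -1) (w x : Fin m → ℝ)
    (hw : ∑ j, w j ^ 2 = 1) (hx : ∑ j, x j ^ 2 = 1) (hα : (y * dotp w x) ^ 2 < 1) :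
    (roundMeasure k m
      {p | γ / 2 < y * ∑ r, hRound p.1 p.2 w r * ∑ s, p.1 r s * x s}).toReal =
      tailProb k γ (y * dotp w x) := by
  have hy2 : y ^ 2 = 1 := by rcases hy with rfl | rfl <;> norm_num
  have hk' : (0 : ℝ) < k := by exact_mod_cast hk
  set α := y * dotp w x with hαdef
  set u : Fin m → ℝ := fun j => y * x j - α * w j with hu
  have hwx : ∑ j, w j * x j = dotp w x := rfl
  have hwu : ∑ j, w j * u j = 0 := by
    have : ∑ j, w j * u j = y * (∑ j, w j * x j) - α * ∑ j, w j ^ 2 := by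
      rw [Finset.mul_sum, Finset.mul_sum, ← Finset.sum_sub_distrib]
      exact Finset.sum_congr rfl fun j _ => by simp only [hu]; ring
    rw [this, hw, hwx, hαdef]
    ring
  have huu : ∑ j, u j ^ 2 = 1 - α ^ 2 := by
    have : ∑ j, u j ^ 2 =
        y ^ 2 * (∑ j, x j ^ 2) - 2 * α * y * (∑ j, w j * x j) + α ^ 2 * ∑ j, w j ^ 2 := by
      rw [Finset.mul_sum, Finset.mul_sum, Finset.mul_sum, ← Finset.sum_sub_distrib,
        ← Finset.sum_add_distrib]
      exact Finset.sum_congr rfl fun j _ => by simp only [hu]; ring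
    rw [this, hw, hx, hwx, hy2, hαdef]
    ring
  have hrv := measurable_roundVec k
  have hrv' : ∀ i, Measurable fun p : (Fin k → ℝ) × (Fin k → ℝ) => roundVec p.1 p.2 i :=
    fun i => (measurable_pi_apply i).comp hrv
  set σ : NNReal := (k : NNReal)⁻¹ with hσ
  have hσ' : (σ : ℝ) = (k : ℝ)⁻¹ := by simp [hσ]
  set τ : NNReal := σ * NNReal.mk (1 - α ^ 2) (by linarith) with hτ
  have hτ' : (τ : ℝ) = (k : ℝ)⁻¹ * (1 - α ^ 2) := by simp [hτ, hσ']
  have hlaw := map_matVec_pair (k := k) σ σ τ w u (by rw [hw, mul_one]) (by rw [huu, hτ', hσ']) hwu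
  set E : Set (((Fin k → ℝ) × (Fin k → ℝ)) × (Fin k → ℝ)) :=
    {q | γ / 2 < α * ∑ i, roundVec q.1.1 q.2 i * q.1.1 i + ∑ i, roundVec q.1.1 q.2 i * q.1.2 i}
    with hE
  have hEm : MeasurableSet E := by
    have h : ∀ i, Measurable fun q : ((Fin k → ℝ) × (Fin k → ℝ)) × (Fin k → ℝ) =>
        roundVec q.1.1 q.2 i := fun i =>
      (hrv' i).comp (Measurable.prodMk (by fun_prop) (by fun_prop) :
        Measurable fun q : ((Fin k → ℝ) × (Fin k → ℝ)) × (Fin k → ℝ) => (q.1.1, q.2))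
    exact measurableSet_lt (by fun_prop) (by fun_prop)
  have hmv : Measurable fun A : Fin k → Fin m → ℝ => (matVec A w, matVec A u) :=
    (measurable_matVec w).prodMk (measurable_matVec u)
  have hpre : {p : (Fin k → Fin m → ℝ) × (Fin k → ℝ) |
      γ / 2 < y * ∑ r, hRound p.1 p.2 w r * ∑ s, p.1 r s * x s} =
      Prod.map (fun A : Fin k → Fin m → ℝ => (matVec A w, matVec A u)) id ⁻¹' E := by
    ext p
    simp only [Set.mem_ofPred_eq, Set.mem_preimage, hE, Prod.map_fst, Prod.map_snd, id_eq,
      hRound_eq_roundVec]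
    have : y * ∑ r, roundVec (matVec p.1 w) p.2 r * ∑ s, p.1 r s * x s =
        α * ∑ i, roundVec (matVec p.1 w) p.2 i * matVec p.1 w i +
          ∑ i, roundVec (matVec p.1 w) p.2 i * matVec p.1 u i := by
      rw [Finset.mul_sum, Finset.mul_sum, ← Finset.sum_add_distrib]
      refine Finset.sum_congr rfl fun r _ => ?_
      have : matVec p.1 u r = y * (∑ s, p.1 r s * x s) - α * matVec p.1 w r := by
        simp only [matVec, hu, Finset.mul_sum, ← Finset.sum_sub_distrib]
        exact Finset.sum_congr rfl fun j _ => by ring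
      rw [this]
      ring
    rw [this]
  have hmap : (roundMeasure k m).map
      (Prod.map (fun A : Fin k → Fin m → ℝ => (matVec A w, matVec A u)) id) =
      ((Measure.pi fun _ : Fin k => gaussianReal 0 σ).prod
        (Measure.pi fun _ : Fin k => gaussianReal 0 τ)).prod
        (Measure.pi fun _ : Fin k => volume.restrict (Set.Icc (0 : ℝ) 1)) := by
    rw [roundMeasure, ← Measure.map_prod_map _ _ hmv measurable_id, hlaw, Measure.map_id]
  rw [tailProb_eq_lintegral, hpre, ← Measure.map_apply (hmv.prodMap measurable_id) hEm, hmap,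
    Measure.prod_apply_symm hEm, projMeasure, lintegral_prod_symm
    (fun p => gaussianReal 0 1 (Set.Ioi (threshold γ α p)))
    (antitone_gaussianReal_Ioi.measurable.comp (measurable_threshold γ α)).aemeasurable]
  congr 1
  refine lintegral_congr fun t => ?_
  rw [Measure.prod_apply (measurable_prodMk_right hEm)]
  refine lintegral_congr fun g => ?_
  set h := roundVec g t with hh
  have hpos : 0 < ∑ i, h i ^ 2 := lt_of_lt_of_le (by norm_num) (le_sum_sq_roundVec hk g t)
  have hv0 : 0 < (k : ℝ)⁻¹ * (1 - α ^ 2) * ∑ i, h i ^ 2 := by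
    have : 0 < 1 - α ^ 2 := by linarith
    positivity
  have hlin := map_sum_pi_gaussianReal τ (τ * NNReal.mk (∑ i, h i ^ 2) hpos.le) h (by simp)
  have hset : Prod.mk g ⁻¹' ((fun x => (x, t)) ⁻¹' E) =
      (fun a : Fin k → ℝ => ∑ i, h i * a i) ⁻¹' Set.Ioi (γ / 2 - α * ∑ i, h i * g i) := by
    ext a
    simp only [hE, Set.mem_preimage, Set.mem_ofPred_eq, Set.mem_Ioi, ← hh]
    constructor <;> intro H <;> linarith
  rw [hset, ← Measure.map_apply (by fun_prop) measurableSet_Ioi, hlin,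
    gaussianReal_Ioi_scale _ _ _ (Real.sqrt_pos.2 hv0)]
  · rfl
  · rw [Real.sq_sqrt hv0.le, NNReal.coe_mul, hτ']
    rfl

theorem stdTail_sub {a b : ℝ} (hab : a ≤ b) :
    stdTail a - stdTail b = ∫ x in Set.Ioc a b, gaussianPDFReal 0 1 x := by
  have h : (gaussianReal 0 1).real (Set.Ioi a) =
      (gaussianReal 0 1).real (Set.Ioc a b) + (gaussianReal 0 1).real (Set.Ioi b) := by
    rw [← Set.Ioc_union_Ioi_eq_Ioi hab]
    exact measureReal_union Set.Ioc_disjoint_Ioi_same measurableSet_Ioi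
  have h' : (gaussianReal 0 1).real (Set.Ioc a b) =
      ∫ x in Set.Ioc a b, gaussianPDFReal 0 1 x := by
    rw [measureReal_def, gaussianReal_apply_eq_integral _ one_ne_zero, ENNReal.toReal_ofReal]
    exact integral_nonneg fun x => gaussianPDFReal_nonneg _ _ _
  simp only [measureReal_def] at h h'
  rw [stdTail, stdTail, h, h']
  ring

theorem stdTail_nonneg (z : ℝ) : 0 ≤ stdTail z := ENNReal.toReal_nonneg

theorem stdTail_le_one (z : ℝ) : stdTail z ≤ 1 := by
  have : (gaussianReal 0 1).real (Set.Ioi z) ≤ 1 := measureReal_le_one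
  exact this

theorem antitone_stdTail : Antitone stdTail :=
  fun _ _ h => ENNReal.toReal_mono (measure_ne_top _ _) (antitone_gaussianReal_Ioi h)

theorem gaussianPDFReal_le_one (x : ℝ) : gaussianPDFReal 0 1 x ≤ 1 := by
  rw [gaussianPDFReal]
  have h₁ : (√(2 * Real.pi * ((1 : NNReal) : ℝ)))⁻¹ ≤ 1 := by
    refine inv_le_one_of_one_le₀ (Real.one_le_sqrt.2 ?_)
    have := Real.pi_gt_three
    simp only [NNReal.coe_one]
    linarith
  have h₂ : Real.exp (-(x - 0) ^ 2 / (2 * ((1 : NNReal) : ℝ))) ≤ 1 := by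
    refine Real.exp_le_one_iff.2 ?_
    simp only [NNReal.coe_one]
    nlinarith [sq_nonneg (x - 0)]
  exact mul_le_one₀ h₁ (Real.exp_pos _).le h₂

theorem stdTail_sub_le {a b : ℝ} (hab : a ≤ b) : stdTail a - stdTail b ≤ b - a := by
  rw [stdTail_sub hab]
  calc _ ≤ ∫ _x in Set.Ioc a b, (1 : ℝ) :=
        setIntegral_mono (integrable_gaussianPDFReal _ _).integrableOn
          (integrableOn_const (by simp)) gaussianPDFReal_le_one
    _ = b - a := by simp [hab]

theorem exp_le_gaussianPDFReal {u x : ℝ} (hx : |x| ≤ u + 1) :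
    Real.exp (-u ^ 2 - 3) ≤ gaussianPDFReal 0 1 x := by
  have hx2 : x ^ 2 ≤ (u + 1) ^ 2 := sq_le_sq' (by linarith [neg_le_of_abs_le hx])
    (le_of_abs_le hx)
  have h₁ : Real.exp (-2) ≤ (√(2 * Real.pi * ((1 : NNReal) : ℝ)))⁻¹ := by
    rw [Real.exp_neg]
    refine inv_anti₀ (Real.sqrt_pos.2 (by simp; positivity)) ?_
    refine Real.sqrt_le_iff.2 ⟨(Real.exp_pos _).le, ?_⟩
    have := Real.pi_lt_four
    have h2 := Real.add_one_le_exp (2 : ℝ)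
    simp only [NNReal.coe_one]
    nlinarith
  rw [gaussianPDFReal, show -u ^ 2 - 3 = -2 + (-u ^ 2 - 1) by ring, Real.exp_add]
  refine mul_le_mul h₁ (Real.exp_le_exp.2 ?_) (Real.exp_pos _).le (by positivity)
  simp only [NNReal.coe_one]
  nlinarith [sq_nonneg (u - 1)]

theorem exp_le_stdTail_sub {u a b : ℝ} (hab : b = a + 1)
    (h : ∀ x ∈ Set.Ioc a b, |x| ≤ u + 1) : Real.exp (-u ^ 2 - 3) ≤ stdTail a - stdTail b := by
  rw [stdTail_sub (by linarith)]
  calc _ = ∫ _x in Set.Ioc a b, Real.exp (-u ^ 2 - 3) := by simp [hab]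
    _ ≤ _ := setIntegral_mono_on (integrableOn_const (by simp))
          (integrable_gaussianPDFReal _ _).integrableOn measurableSet_Ioc
          fun x hx => exp_le_gaussianPDFReal (h x hx)

theorem exp_le_stdTail {u : ℝ} (hu : 0 ≤ u) : Real.exp (-u ^ 2 - 3) ≤ stdTail u := by
  have := exp_le_stdTail_sub (a := u) (b := u + 1) rfl
    fun x hx => abs_le.2 ⟨by linarith [hx.1], hx.2⟩
  linarith [stdTail_nonneg (u + 1)]

theorem exp_le_one_sub_stdTail_neg {u : ℝ} (hu : 0 ≤ u) :
    Real.exp (-u ^ 2 - 3) ≤ 1 - stdTail (-u) := by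
  have := exp_le_stdTail_sub (a := -u - 1) (b := -u) (by ring)
    fun x hx => abs_le.2 ⟨by linarith [hx.1], by linarith [hx.2]⟩
  linarith [stdTail_le_one (-u - 1)]

theorem integral_exp_neg_sq_gaussianReal {k : ℕ} (hk : 0 < k) {l : ℝ} (hl : 0 ≤ l) :
    ∫ x, Real.exp (-(l * k) * x ^ 2) ∂(gaussianReal 0 (k : NNReal)⁻¹) = (√(1 + 2 * l))⁻¹ := by
  have hk' : (0 : ℝ) < k := by exact_mod_cast hk
  rw [integral_gaussianReal_eq_integral_smul (by simp; omega)]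
  have h : ∀ x : ℝ, gaussianPDFReal 0 (k : NNReal)⁻¹ x • Real.exp (-(l * k) * x ^ 2) =
      (√(2 * Real.pi * (k : ℝ)⁻¹))⁻¹ * Real.exp (-(k * (l + 1 / 2)) * x ^ 2) := by
    intro x
    simp only [gaussianPDFReal, smul_eq_mul, mul_assoc, ← Real.exp_add, NNReal.coe_inv,
      NNReal.coe_natCast]
    congr 2
    field_simp
    ring
  simp_rw [h]
  rw [integral_const_mul, integral_gaussian, ← Real.sqrt_inv, ← Real.sqrt_inv,
    ← Real.sqrt_mul (by positivity)]
  congr 1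
  have := Real.pi_pos
  field_simp
  ring

theorem integral_exp_neg_sum_sq {k : ℕ} (hk : 0 < k) {l : ℝ} (hl : 0 ≤ l) :
    ∫ p, Real.exp (-(l * k) * ∑ i, p.1 i ^ 2) ∂(projMeasure k) = (√(1 + 2 * l))⁻¹ ^ k := by
  rw [projMeasure, integral_fun_fst (fun g : Fin k → ℝ => Real.exp (-(l * k) * ∑ i, g i ^ 2))]
  have h : ∀ g : Fin k → ℝ, Real.exp (-(l * k) * ∑ i, g i ^ 2) =
      ∏ i, Real.exp (-(l * k) * g i ^ 2) := by
    intro g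
    rw [← Real.exp_sum, Finset.mul_sum]
  simp_rw [h]
  rw [integral_fintype_prod_eq_pow (fun x : ℝ => Real.exp (-(l * k) * x ^ 2)),
    integral_exp_neg_sq_gaussianReal hk hl]
  simp

theorem integrable_exp_neg_sum_sq (k : ℕ) {l : ℝ} (hl : 0 ≤ l) :
    Integrable (fun p : (Fin k → ℝ) × (Fin k → ℝ) => Real.exp (-(l * k) * ∑ i, p.1 i ^ 2))
      (projMeasure k) := by
  refine Integrable.of_bound (C := 1) (by fun_prop) (Filter.Eventually.of_forall fun p => ?_)
  rw [Real.norm_eq_abs, abs_of_pos (Real.exp_pos _), Real.exp_le_one_iff, neg_mul]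
  have : 0 ≤ l * k * ∑ i, p.1 i ^ 2 := by positivity
  linarith

theorem integrable_stdTail_threshold (k : ℕ) (γ α : ℝ) :
    Integrable (fun p => stdTail (threshold γ α p)) (projMeasure k) := by
  refine Integrable.of_bound (C := 1)
    (antitone_stdTail.measurable.comp (measurable_threshold γ α)).aestronglyMeasurable
    (Filter.Eventually.of_forall fun p => ?_)
  rw [Real.norm_eq_abs, abs_of_nonneg (stdTail_nonneg _)]
  exact stdTail_le_one _

theorem inv_sqrt_one_sub_sq_bounds {γ α β : ℝ} (hγ' : γ ≤ 1 / 100) (hα : 0 ≤ α)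
    (hαβ : α ≤ β) (hβ : β ≤ γ) :
    1 ≤ (√(1 - α ^ 2))⁻¹ ∧ (√(1 - α ^ 2))⁻¹ ≤ (√(1 - β ^ 2))⁻¹ ∧ (√(1 - β ^ 2))⁻¹ ≤ 2 ∧
      (√(1 - β ^ 2))⁻¹ - (√(1 - α ^ 2))⁻¹ ≤ 2 * γ * (β - α) := by
  have key : ∀ z : ℝ, 0 ≤ z → z ≤ γ → 9 / 10 ≤ √(1 - z ^ 2) ∧ √(1 - z ^ 2) ≤ 1 := by
    intro z hz hzγ
    refine ⟨Real.le_sqrt_of_sq_le (by nlinarith), Real.sqrt_le_one.2 (by nlinarith [sq_nonneg z])⟩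
  obtain ⟨a₁, a₂⟩ := key α hα (hαβ.trans hβ)
  obtain ⟨b₁, b₂⟩ := key β (hα.trans hαβ) hβ
  have hm : √(1 - β ^ 2) ≤ √(1 - α ^ 2) := Real.sqrt_le_sqrt (by nlinarith)
  have ha : √(1 - α ^ 2) ^ 2 = 1 - α ^ 2 := Real.sq_sqrt (by nlinarith)
  have hb : √(1 - β ^ 2) ^ 2 = 1 - β ^ 2 := Real.sq_sqrt (by nlinarith)
  set s := √(1 - α ^ 2)
  set t := √(1 - β ^ 2)
  have hs : 0 < s := by linarith
  have ht : 0 < t := by linarith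
  refine ⟨(one_le_inv₀ hs).2 a₂, inv_anti₀ ht hm, ?_, ?_⟩
  · rw [inv_le_comm₀ ht two_pos]
    linarith
  · have e : t⁻¹ - s⁻¹ = (s - t) / (t * s) := by field_simp
    have hd : s - t ≤ 10 / 9 * γ * (β - α) := by
      have : (s - t) * (s + t) = (β - α) * (β + α) := by nlinarith
      have h2 : (β - α) * (β + α) ≤ (β - α) * (2 * γ) :=
        mul_le_mul_of_nonneg_left (by linarith) (by linarith)
      nlinarith [mul_nonneg (sub_nonneg.2 hm) (by linarith : (0 : ℝ) ≤ s + t - 9 / 5)]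
    have hts : 81 / 100 ≤ t * s := by nlinarith
    rw [e, div_le_iff₀ (by positivity)]
    have : 0 ≤ γ * (β - α) := mul_nonneg (by linarith) (by linarith)
    nlinarith

theorem sum_sq_bounds_roundVec {k : ℕ} (hk : 0 < k) (g t : Fin k → ℝ) :
    |∑ i, roundVec g t i * g i| ≤ √(∑ i, roundVec g t i ^ 2) * √(∑ i, g i ^ 2) ∧
    √(∑ i, g i ^ 2) ^ 2 - √(∑ i, g i ^ 2) / 10 ≤ ∑ i, roundVec g t i * g i := by
  have hG : √(∑ i, g i ^ 2) ^ 2 = ∑ i, g i ^ 2 :=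
    Real.sq_sqrt (Finset.sum_nonneg fun i _ => sq_nonneg _)
  refine ⟨?_, ?_⟩
  · rw [← Real.sqrt_mul (Finset.sum_nonneg fun i _ => sq_nonneg _)]
    exact Real.abs_le_sqrt (Finset.sum_mul_sq_le_sq_mul_sq _ _ _)
  · have h := Finset.sum_mul_sq_le_sq_mul_sq Finset.univ (fun i => roundVec g t i - g i) g
    have h2 : (∑ i, (roundVec g t i - g i) * g i) ^ 2 ≤ (√(∑ i, g i ^ 2) / 10) ^ 2 := by
      rw [div_pow, hG]
      refine h.trans ?_
      have := mul_le_mul_of_nonneg_right (sum_sq_roundVec_sub_le hk g t)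
        (Finset.sum_nonneg (s := Finset.univ) fun i _ => sq_nonneg (g i))
      linarith
    have h3 := (abs_le_of_sq_le_sq' h2 (by positivity)).1
    have h4 : ∑ i, (roundVec g t i - g i) * g i = ∑ i, roundVec g t i * g i - ∑ i, g i ^ 2 := by
      rw [← Finset.sum_sub_distrib]
      exact Finset.sum_congr rfl fun i _ => by ring
    rw [hG]
    linarith

theorem threshold_eq {k : ℕ} (γ α : ℝ) (p : (Fin k → ℝ) × (Fin k → ℝ)) :
    threshold γ α p = √k / √(∑ i, roundVec p.1 p.2 i ^ 2) *
      ((γ / 2 - α * ∑ i, roundVec p.1 p.2 i * p.1 i) * (√(1 - α ^ 2))⁻¹) := by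
  rw [threshold, Real.sqrt_mul' _ (Finset.sum_nonneg fun i _ => sq_nonneg _),
    Real.sqrt_mul (by positivity), Real.sqrt_inv]
  simp only [div_eq_mul_inv, mul_inv, inv_inv]
  ring

theorem one_div_twenty_le_sqrt {k : ℕ} (hk : 0 < k) (g t : Fin k → ℝ) :
    1 / 20 ≤ √(∑ i, roundVec g t i ^ 2) :=
  Real.le_sqrt_of_sq_le (by linarith [le_sum_sq_roundVec hk g t])

theorem scaled_gap_bounds {γ α β a N G r s : ℝ} (hγ' : γ ≤ 1 / 100) (hα : 0 ≤ α)
    (hαβ : α ≤ β) (hβ : β ≤ γ) (hr : 1 ≤ r) (hrs : r ≤ s) (hs : s ≤ 2)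
    (hd : s - r ≤ 2 * γ * (β - α)) (hN : 1 / 20 ≤ N) (haN : |a| ≤ N * G)
    (haG : G ^ 2 - G / 10 ≤ a) :
    (1 / 5 ≤ G → (γ / 2 - β * a) * s ≤ (γ / 2 - α * a) * r) ∧
    (G ≤ 1 / 5 → (γ / 2 - β * a) * s - (γ / 2 - α * a) * r ≤ N * (β - α)) := by
  have hγ : 0 ≤ γ := by linarith
  have hΔ : 0 ≤ β - α := by linarith
  have e : (γ / 2 - β * a) * s - (γ / 2 - α * a) * r =
      γ / 2 * (s - r) - a * ((β - α) * s + α * (s - r)) := by ring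
  have h1 : γ / 2 * (s - r) ≤ 1 / 10000 * (β - α) := by
    calc γ / 2 * (s - r) ≤ γ / 2 * (2 * γ * (β - α)) := by gcongr
      _ = γ ^ 2 * (β - α) := by ring
      _ ≤ 1 / 10000 * (β - α) := by
        gcongr
        nlinarith
  have hlow : β - α ≤ (β - α) * s + α * (s - r) := by
    nlinarith [mul_nonneg hα (sub_nonneg.2 hrs), mul_nonneg hΔ (by linarith : 0 ≤ s - 1)]
  have hup : (β - α) * s + α * (s - r) ≤ 3 * (β - α) := by
    have h2 : α * (s - r) ≤ 1 * (s - r) :=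
      mul_le_mul_of_nonneg_right (by linarith) (by linarith)
    have h3 : 2 * γ * (β - α) ≤ 1 * (β - α) := mul_le_mul_of_nonneg_right (by linarith) hΔ
    nlinarith [mul_nonneg hΔ (by linarith : 0 ≤ 2 - s)]
  set m := (β - α) * s + α * (s - r)
  constructor
  · intro hG
    have ha : 1 / 50 ≤ a := by nlinarith
    have : 1 / 50 * (β - α) ≤ a * m := mul_le_mul ha hlow hΔ (by linarith)
    linarith
  · intro hG
    have ha : -a ≤ N / 5 := by
      have : N * G ≤ N * (1 / 5) := by gcongr
      linarith [neg_abs_le a]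
    have h2 : -a * m ≤ N / 5 * m := mul_le_mul_of_nonneg_right ha (by linarith)
    have h3 : N / 5 * m ≤ N / 5 * (3 * (β - α)) := by gcongr
    have h4 : 1 / 20 * (β - α) ≤ N * (β - α) := by gcongr
    rw [e]
    linarith

theorem stdTail_threshold_sub_le {k : ℕ} (hk : 0 < k) {γ α β : ℝ} (hγ' : γ ≤ 1 / 100)
    (hα : 0 ≤ α) (hαβ : α ≤ β) (hβ : β ≤ γ) (p : (Fin k → ℝ) × (Fin k → ℝ)) :
    stdTail (threshold γ α p) - stdTail (threshold γ β p) ≤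
      √k * (β - α) * Real.exp (12 * k / 25) * Real.exp (-(12 * k) * ∑ i, p.1 i ^ 2) := by
  obtain ⟨hr, hrs, hs, hd⟩ := inv_sqrt_one_sub_sq_bounds hγ' hα hαβ hβ
  obtain ⟨haN, haG⟩ := sum_sq_bounds_roundVec hk p.1 p.2
  have hN := one_div_twenty_le_sqrt hk p.1 p.2
  have hΔ : 0 ≤ β - α := by linarith
  obtain ⟨hgood, hbad⟩ := scaled_gap_bounds hγ' hα hαβ hβ hr hrs hs hd hN haN haG
  have hG : √(∑ i, p.1 i ^ 2) ^ 2 = ∑ i, p.1 i ^ 2 :=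
    Real.sq_sqrt (Finset.sum_nonneg fun i _ => sq_nonneg _)
  have hG0 : 0 ≤ √(∑ i, p.1 i ^ 2) := Real.sqrt_nonneg _
  have hTα := threshold_eq γ α p
  have hTβ := threshold_eq γ β p
  set N := √(∑ i, roundVec p.1 p.2 i ^ 2)
  have hN0 : 0 < N := by linarith
  rcases le_total (threshold γ β p) (threshold γ α p) with hT | hT
  · have := antitone_stdTail hT
    have h : 0 ≤ √k * (β - α) * Real.exp (12 * k / 25) * Real.exp (-(12 * k) * ∑ i, p.1 i ^ 2) := by
      positivity
    linarith
  rcases le_total (1 / 5) (√(∑ i, p.1 i ^ 2)) with hc | hc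
  · have : threshold γ β p ≤ threshold γ α p := by
      rw [hTα, hTβ]
      exact mul_le_mul_of_nonneg_left (hgood hc) (by positivity)
    have := antitone_stdTail this
    have h : 0 ≤ √k * (β - α) * Real.exp (12 * k / 25) * Real.exp (-(12 * k) * ∑ i, p.1 i ^ 2) := by
      positivity
    linarith
  · refine (stdTail_sub_le hT).trans ?_
    have h1 : threshold γ β p - threshold γ α p ≤ √k * (β - α) := by
      rw [hTα, hTβ, ← mul_sub]
      calc _ ≤ √k / N * (N * (β - α)) := mul_le_mul_of_nonneg_left (hbad hc) (by positivity)
        _ = _ := by field_simp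
    have h2 : 1 ≤ Real.exp (12 * k / 25) * Real.exp (-(12 * k) * ∑ i, p.1 i ^ 2) := by
      rw [← Real.exp_add]
      refine Real.one_le_exp ?_
      have : ∑ i, p.1 i ^ 2 ≤ 1 / 25 := by
        rw [← hG]
        nlinarith
      have hk0 : (0 : ℝ) ≤ 12 * k := by positivity
      nlinarith [mul_le_mul_of_nonneg_left this hk0]
    rw [mul_assoc]
    exact h1.trans (le_mul_of_one_le_right (by positivity) h2)

theorem tailProb_sub_le {k : ℕ} (hk : 0 < k) {γ α β : ℝ} (hγ' : γ ≤ 1 / 100)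
    (hα : 0 ≤ α) (hαβ : α ≤ β) (hβ : β ≤ γ) :
    tailProb k γ α - tailProb k γ β ≤ √k * (β - α) * Real.exp (-k) := by
  have hΔ : 0 ≤ β - α := by linarith
  rw [tailProb, tailProb, ← integral_sub (integrable_stdTail_threshold _ _ _)
    (integrable_stdTail_threshold _ _ _)]
  calc _ ≤ ∫ p, √k * (β - α) * Real.exp (12 * k / 25) * Real.exp (-(12 * k) * ∑ i, p.1 i ^ 2)
          ∂(projMeasure k) :=
        integral_mono ((integrable_stdTail_threshold _ _ _).sub (integrable_stdTail_threshold _ _ _))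
          ((integrable_exp_neg_sum_sq k (by norm_num)).const_mul _)
          fun p => stdTail_threshold_sub_le hk hγ' hα hαβ hβ p
    _ = √k * (β - α) * (Real.exp (12 * k / 25) * (1 / 5) ^ k) := by
        rw [integral_const_mul, integral_exp_neg_sum_sq hk (by norm_num),
          show (1 + 2 * 12 : ℝ) = 5 ^ 2 by norm_num, Real.sqrt_sq (by norm_num)]
        ring
    _ ≤ √k * (β - α) * Real.exp (-k) := by
        refine mul_le_mul_of_nonneg_left ?_ (by positivity)
        have h5 : (1 / 5 : ℝ) ≤ Real.exp (-(37 / 25)) := by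
          have h1 := Real.exp_one_lt_d9
          have : Real.exp (37 / 25) ≤ 5 := by
            refine le_of_pow_le_pow_left₀ (n := 2) two_ne_zero (by norm_num) ?_
            rw [← Real.exp_nat_mul]
            calc Real.exp ((2 : ℕ) * (37 / 25)) ≤ Real.exp ((3 : ℕ) * 1) :=
                  Real.exp_le_exp.2 (by norm_num)
              _ = Real.exp 1 ^ 3 := Real.exp_nat_mul _ _
              _ ≤ 2.7182818286 ^ 3 := by gcongr
              _ ≤ 5 ^ 2 := by norm_num
          rw [Real.exp_neg, one_div]
          exact inv_anti₀ (Real.exp_pos _) this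
        calc _ ≤ Real.exp (12 * k / 25) * Real.exp (-(37 / 25)) ^ k := by gcongr
          _ = Real.exp (-k) := by
            rw [← Real.exp_nat_mul, ← Real.exp_add]
            congr 1
            ring

theorem exp_le_tailProb_zero {k : ℕ} (hk : 0 < k) {γ : ℝ} (hγ' : γ ≤ 1 / 100) :
    Real.exp (-k / 100 - 3) ≤ tailProb k γ 0 := by
  have h : ∀ p : (Fin k → ℝ) × (Fin k → ℝ),
      Real.exp (-k / 100 - 3) ≤ stdTail (threshold γ 0 p) := by
    intro p
    have hN := one_div_twenty_le_sqrt hk p.1 p.2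
    have hT : threshold γ 0 p ≤ √k / 10 := by
      rw [threshold_eq]
      set N := √(∑ i, roundVec p.1 p.2 i ^ 2)
      simp only [zero_mul, sub_zero, ne_eq, OfNat.ofNat_ne_zero, not_false_eq_true, zero_pow,
        Real.sqrt_one, inv_one, mul_one]
      rw [div_mul_eq_mul_div, div_le_iff₀ (by linarith), div_mul_eq_mul_div, mul_div_assoc]
      refine mul_le_mul_of_nonneg_left ?_ (Real.sqrt_nonneg _)
      linarith
    refine le_trans ?_ (antitone_stdTail hT)
    refine le_trans (Real.exp_le_exp.2 (le_of_eq ?_)) (exp_le_stdTail (u := √k / 10) (by positivity))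
    rw [div_pow, Real.sq_sqrt (by positivity)]
    ring
  calc _ = ∫ _p, Real.exp (-k / 100 - 3) ∂(projMeasure k) := by simp
    _ ≤ _ := integral_mono (integrable_const _) (integrable_stdTail_threshold _ _ _) h

theorem exp_le_one_sub_tailProb {k : ℕ} (hk : 0 < k) {γ : ℝ} (hγ : 0 ≤ γ) (hγ' : γ ≤ 1 / 100) :
    Real.exp (-k / 100 - 3) ≤ 1 - tailProb k γ γ := by
  have h : ∀ p : (Fin k → ℝ) × (Fin k → ℝ),
      Real.exp (-3) * Real.exp (-(1 / 2500 * k) * ∑ i, p.1 i ^ 2) ≤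
        1 - stdTail (threshold γ γ p) := by
    intro p
    have hN := one_div_twenty_le_sqrt hk p.1 p.2
    obtain ⟨hr, -, hr2, -⟩ := inv_sqrt_one_sub_sq_bounds hγ' hγ le_rfl le_rfl
    obtain ⟨haN, -⟩ := sum_sq_bounds_roundVec hk p.1 p.2
    have hG : √(∑ i, p.1 i ^ 2) ^ 2 = ∑ i, p.1 i ^ 2 :=
      Real.sq_sqrt (Finset.sum_nonneg fun i _ => sq_nonneg _)
    have hT := threshold_eq γ γ p
    set N := √(∑ i, roundVec p.1 p.2 i ^ 2)
    set G := √(∑ i, p.1 i ^ 2)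
    set a := ∑ i, roundVec p.1 p.2 i * p.1 i
    set r := (√(1 - γ ^ 2))⁻¹
    have hN0 : 0 < N := by linarith
    have hG0 : 0 ≤ G := Real.sqrt_nonneg _
    have hlow : -(√k / 50 * G) ≤ threshold γ γ p := by
      have h1 : -(N * G / 50) ≤ (γ / 2 - γ * a) * r := by
        have h2 : γ * a * r ≤ 1 / 100 * (N * G) * 2 :=
          calc γ * a * r ≤ γ * (N * G) * r := by
                gcongr
                exact (le_abs_self a).trans haN
            _ ≤ 1 / 100 * (N * G) * 2 := by gcongr
        have h3 : 0 ≤ γ / 2 * r := by positivity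
        nlinarith
      rw [hT]
      calc -(√k / 50 * G) = √k / N * -(N * G / 50) := by field_simp
        _ ≤ _ := mul_le_mul_of_nonneg_left h1 (by positivity)
    have h4 := antitone_stdTail hlow
    have h5 := exp_le_one_sub_stdTail_neg (u := √k / 50 * G) (by positivity)
    refine le_trans (le_of_eq ?_) (h5.trans (by linarith))
    rw [← Real.exp_add, mul_pow, hG, div_pow, Real.sq_sqrt (by positivity)]
    congr 1
    ring
  have hint := integrable_stdTail_threshold k γ γ
  calc _ = Real.exp (-3) * Real.exp (-(1 / 100)) ^ k := by
        rw [← Real.exp_nat_mul, ← Real.exp_add]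
        congr 1
        ring
    _ ≤ Real.exp (-3) * (√(1 + 2 * (1 / 2500)))⁻¹ ^ k := by
        gcongr
        rw [Real.exp_neg]
        refine inv_anti₀ (Real.sqrt_pos.2 (by norm_num)) ?_
        refine Real.sqrt_le_iff.2 ⟨(Real.exp_pos _).le, ?_⟩
        have := Real.add_one_le_exp (1 / 100 : ℝ)
        nlinarith
    _ = ∫ p, Real.exp (-3) * Real.exp (-(1 / 2500 * k) * ∑ i, p.1 i ^ 2) ∂(projMeasure k) := by
        rw [integral_const_mul, integral_exp_neg_sum_sq hk (by norm_num)]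
    _ ≤ ∫ p, (1 - stdTail (threshold γ γ p)) ∂(projMeasure k) :=
        integral_mono ((integrable_exp_neg_sum_sq k (by norm_num)).const_mul _)
          ((integrable_const _).sub hint) h
    _ = 1 - tailProb k γ γ := by
        rw [integral_sub (integrable_const _) hint]
        simp [tailProb]

theorem sqrt_mul_exp_neg_le {k : ℕ} (hk : 10 ≤ k) {γ : ℝ} (hγ : 0 ≤ γ) (hγ' : γ ≤ 1 / 100) :
    √k * γ * Real.exp (-k) ≤ Real.exp (-k / 100 - 3) := by
  have hk' : (10 : ℝ) ≤ k := by exact_mod_cast hk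
  have h1 : √k ≤ Real.exp (k / 2) := by
    refine Real.sqrt_le_iff.2 ⟨(Real.exp_pos _).le, ?_⟩
    rw [← Real.exp_nat_mul]
    have := Real.add_one_le_exp (k : ℝ)
    push_cast
    rw [mul_div_cancel₀ _ (two_ne_zero)]
    linarith
  calc _ ≤ Real.exp (k / 2) * 1 * Real.exp (-k) := by gcongr; linarith
    _ = Real.exp (-k / 2) := by
      rw [mul_one, ← Real.exp_add]
      congr 1
      ring
    _ ≤ _ := Real.exp_le_exp.2 (by linarith)

theorem interpolation_le_tailProb {k : ℕ} (hk : 10 ≤ k) {γ α : ℝ} (hγ' : γ ≤ 1 / 100)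
    (hα : 0 < α) (hαγ : α ≤ γ) : (γ - α) / γ * tailProb k γ 0 ≤ tailProb k γ α := by
  have hk0 : 0 < k := by omega
  have hγ : 0 < γ := by linarith
  have h1 := tailProb_sub_le hk0 hγ' le_rfl hα.le hαγ
  have h2 := (sqrt_mul_exp_neg_le hk hγ.le hγ').trans (exp_le_tailProb_zero hk0 hγ')
  have h3 : √k * (α - 0) * Real.exp (-k) ≤ α / γ * tailProb k γ 0 := by
    rw [div_mul_eq_mul_div, le_div_iff₀ hγ]
    nlinarith
  rw [sub_div, div_self hγ.ne']
  linarith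

theorem interpolation_le_one_sub_tailProb {k : ℕ} (hk : 10 ≤ k) {γ α : ℝ} (hγ' : γ ≤ 1 / 100)
    (hα : 0 < α) (hαγ : α ≤ γ) : α / γ * (1 - tailProb k γ γ) ≤ 1 - tailProb k γ α := by
  have hk0 : 0 < k := by omega
  have hγ : 0 < γ := by linarith
  have h1 := tailProb_sub_le hk0 hγ' hα.le hαγ le_rfl
  have h2 := (sqrt_mul_exp_neg_le hk hγ.le hγ').trans (exp_le_one_sub_tailProb hk0 hγ.le hγ')
  have h3 : √k * (γ - α) * Real.exp (-k) ≤ (γ - α) / γ * (1 - tailProb k γ γ) := by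
    rw [div_mul_eq_mul_div, le_div_iff₀ hγ]
    nlinarith
  rw [sub_div, div_self hγ.ne'] at h3
  linarith

theorem measurableSet_margin {k m : ℕ} (γ : ℝ) (w : Fin m → ℝ) :
    MeasurableSet {z : ((Fin k → Fin m → ℝ) × (Fin k → ℝ)) × ((Fin m → ℝ) × ℝ) |
      γ / 2 < z.2.2 * ∑ r, hRound z.1.1 z.1.2 w r * ∑ s, z.1.1 r s * z.2.1 s} := by
  have h : ∀ i, Measurable fun z : ((Fin k → Fin m → ℝ) × (Fin k → ℝ)) × ((Fin m → ℝ) × ℝ) =>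
      hRound z.1.1 z.1.2 w i := fun i =>
    ((measurable_pi_apply i).comp (measurable_roundVec k)).comp
      (((measurable_matVec w).comp (by fun_prop)).prodMk (by fun_prop) :
        Measurable fun z : ((Fin k → Fin m → ℝ) × (Fin k → ℝ)) × ((Fin m → ℝ) × ℝ) =>
          (matVec z.1.1 w, z.1.2))
  exact measurableSet_lt (by fun_prop) (by fun_prop)

theorem measurable_margin {m : ℕ} (w : Fin m → ℝ) :
    Measurable fun q : (Fin m → ℝ) × ℝ => q.2 * dotp w q.1 := by
  unfold dotp
  fun_prop

theorem integral_measure_section {α β : Type*} [MeasurableSpace α] [MeasurableSpace β]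
    (μ : Measure α) (ν : Measure β) [IsProbabilityMeasure μ] [IsProbabilityMeasure ν]
    {E : Set (α × β)} (hE : MeasurableSet E) :
    ∫ p, (ν {q | (p, q) ∈ E}).toReal ∂μ = ∫ q, (μ {p | (p, q) ∈ E}).toReal ∂ν := by
  change ∫ p, (ν (Prod.mk p ⁻¹' E)).toReal ∂μ = ∫ q, (μ ((fun p => (p, q)) ⁻¹' E)).toReal ∂ν
  rw [integral_toReal (measurable_measure_prodMk_left hE).aemeasurable
      (Filter.Eventually.of_forall fun _ => measure_lt_top _ _),
    integral_toReal (measurable_measure_prodMk_right hE).aemeasurable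
      (Filter.Eventually.of_forall fun _ => measure_lt_top _ _)]
  congr 1
  exact (Measure.prod_apply hE).symm.trans (Measure.prod_apply_symm hE)

theorem integrable_measure_section {α β : Type*} [MeasurableSpace α] [MeasurableSpace β]
    (μ : Measure α) (ν : Measure β) [IsProbabilityMeasure μ] [IsProbabilityMeasure ν]
    {E : Set (α × β)} (hE : MeasurableSet E) :
    Integrable (fun q => (μ {p | (p, q) ∈ E}).toReal) ν := by
  refine Integrable.of_bound (C := 1)
    (measurable_measure_prodMk_right hE).ennreal_toReal.aestronglyMeasurable
    (Filter.Eventually.of_forall fun q => ?_)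
  rw [Real.norm_eq_abs, abs_of_nonneg ENNReal.toReal_nonneg]
  exact ENNReal.toReal_le_of_le_ofReal zero_le_one (by simpa using prob_le_one)

theorem integral_card_div {α : Type*} [MeasurableSpace α] (μ : Measure α) [IsProbabilityMeasure μ]
    {n : ℕ} (P : Fin n → α → Prop) (hP : ∀ r, MeasurableSet {p | P r p}) :
    ∫ p, ((Nat.card {r : Fin n // P r p} : ℝ) / n) ∂μ = (∑ r, (μ {p | P r p}).toReal) / n := by
  classical
  rw [integral_div]
  have h : ∀ p, (Nat.card {r : Fin n // P r p} : ℝ) =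
      ∑ r, Set.indicator {p | P r p} (fun _ => (1 : ℝ)) p := by
    intro p
    rw [Nat.card_eq_fintype_card, Fintype.card_subtype, Finset.card_filter]
    push_cast
    exact Finset.sum_congr rfl fun r _ => by simp [Set.indicator_apply]
  simp_rw [h]
  rw [integral_finsetSum _ fun r _ => (integrable_const _).indicator (hP r)]
  congr 1
  exact Finset.sum_congr rfl fun r _ => by rw [integral_indicator_const _ (hP r)]; simp [measureReal_def]

theorem measurableSet_Xset (d : ℕ) (c : ℝ) : MeasurableSet (Xset d c) := by
  have h1 : MeasurableSet {x : Fin (d + 1) → ℝ | ∑ j, x j ^ 2 = 1} :=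
    measurableSet_eq_fun (by fun_prop) (by fun_prop)
  have h2 : MeasurableSet {x : Fin (d + 1) → ℝ | ∑ j : Fin d, x j.castSucc ^ 2 ≤ c ^ 2} :=
    measurableSet_le (by fun_prop) (by fun_prop)
  exact h1.inter h2

theorem abs_dotp_le {d : ℕ} {c : ℝ} (hc : 0 ≤ c) {w x : Fin (d + 1) → ℝ} (hw : w ∈ Hset d)
    (hx : x ∈ Xset d c) : |dotp w x| ≤ c := by
  obtain ⟨hw1, hw2⟩ := hw
  refine abs_le_of_sq_le_sq ?_ hc
  rw [Fin.sum_univ_castSucc, hw2] at hw1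
  have h := Finset.sum_mul_sq_le_sq_mul_sq Finset.univ (fun j : Fin d => w j.castSucc)
    fun j => x j.castSucc
  have h1 : ∑ j : Fin d, w j.castSucc ^ 2 = 1 := by linarith
  rw [h1, one_mul] at h
  unfold dotp
  rw [Fin.sum_univ_castSucc, hw2, zero_mul, add_zero]
  exact h.trans hx.2

theorem exists_mem_Xset_dotp_eq {d : ℕ} {c α : ℝ} (hα : 0 ≤ α) (hαc : α ≤ c) (hc1 : c ≤ 1)
    {w : Fin (d + 1) → ℝ} (hw : w ∈ Hset d) : ∃ x ∈ Xset d c, dotp w x = α := by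
  obtain ⟨hw1, hw2⟩ := hw
  rw [Fin.sum_univ_castSucc, hw2] at hw1
  have h1 : ∑ j : Fin d, w j.castSucc ^ 2 = 1 := by linarith
  have h2 : ∑ j : Fin d, (α * w j.castSucc) ^ 2 = α ^ 2 := by
    simp_rw [mul_pow, ← Finset.mul_sum, h1, mul_one]
  refine ⟨Fin.snoc (fun j => α * w j.castSucc) √(1 - α ^ 2), ⟨?_, ?_⟩, ?_⟩
  · rw [Fin.sum_univ_castSucc]
    simp only [Fin.snoc_castSucc, Fin.snoc_last]
    rw [h2, Real.sq_sqrt (by nlinarith)]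
    ring
  · simp only [Fin.snoc_castSucc]
    rw [h2]
    gcongr
  · unfold dotp
    rw [Fin.sum_univ_castSucc]
    simp only [Fin.snoc_castSucc, Fin.snoc_last, hw2, zero_mul, add_zero]
    calc _ = α * ∑ j : Fin d, w j.castSucc ^ 2 := by
          rw [Finset.mul_sum]
          exact Finset.sum_congr rfl fun j _ => by ring
      _ = α := by rw [h1, mul_one]

theorem tailProb_nonneg (k : ℕ) (γ α : ℝ) : 0 ≤ tailProb k γ α :=
  integral_nonneg fun _ => stdTail_nonneg _

theorem tailProb_le_one (k : ℕ) (γ α : ℝ) : tailProb k γ α ≤ 1 := by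
  calc _ ≤ ∫ _p, (1 : ℝ) ∂(projMeasure k) := integral_mono (integrable_stdTail_threshold _ _ _)
        (integrable_const _) fun _ => stdTail_le_one _
    _ = 1 := by simp

theorem measure_margin_of_mem {d k : ℕ} {c : ℝ} (hk : 0 < k) (hc : 0 ≤ c) (hc1 : c < 1)
    {w x : Fin (d + 1) → ℝ} {y : ℝ} (hw : w ∈ Hset d) (hx : x ∈ Xset d c) (hy : y = 1 ∨ y = -1)
    (γ : ℝ) :
    (roundMeasure k (d + 1)
      {p | γ / 2 < y * ∑ r, hRound p.1 p.2 w r * ∑ s, p.1 r s * x s}).toReal =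
      tailProb k γ (y * dotp w x) := by
  refine measure_margin hk γ y hy w x hw.1 hx.1 ?_
  have hy2 : y ^ 2 = 1 := by rcases hy with rfl | rfl <;> norm_num
  have h := abs_le.1 (abs_dotp_le hc hw hx)
  rw [mul_pow, hy2]
  nlinarith

theorem measurableSet_margin_section {k m : ℕ} (γ y : ℝ) (w x : Fin m → ℝ) :
    MeasurableSet {p : (Fin k → Fin m → ℝ) × (Fin k → ℝ) |
      γ / 2 < y * ∑ r, hRound p.1 p.2 w r * ∑ s, p.1 r s * x s} :=
  measurable_prodMk_right (y := ((x, y) : (Fin m → ℝ) × ℝ)) (measurableSet_margin γ w)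

theorem measurableSet_margin_le_section {k m : ℕ} (γ y : ℝ) (w x : Fin m → ℝ) :
    MeasurableSet {p : (Fin k → Fin m → ℝ) × (Fin k → ℝ) |
      y * ∑ r, hRound p.1 p.2 w r * ∑ s, p.1 r s * x s ≤ γ / 2} := by
  simpa only [Set.compl_ofPred, not_lt] using (measurableSet_margin_section γ y w x).compl

theorem measure_margin_le_of_mem {d k : ℕ} {c : ℝ} (hk : 0 < k) (hc : 0 ≤ c) (hc1 : c < 1)
    {w x : Fin (d + 1) → ℝ} {y : ℝ} (hw : w ∈ Hset d) (hx : x ∈ Xset d c) (hy : y = 1 ∨ y = -1)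
    (γ : ℝ) :
    (roundMeasure k (d + 1)
      {p | y * ∑ r, hRound p.1 p.2 w r * ∑ s, p.1 r s * x s ≤ γ / 2}).toReal =
      1 - tailProb k γ (y * dotp w x) := by
  rw [← measure_margin_of_mem hk hc hc1 hw hx hy γ]
  have h := probReal_compl_eq_one_sub (μ := roundMeasure k (d + 1))
    (measurableSet_margin_section γ y w x)
  simp only [measureReal_def] at h
  rw [← h]
  congr 2
  ext p
  simp

theorem phi_eq {d k : ℕ} {c γ : ℝ} {φ : ℝ → ℝ} (hk : 0 < k) (hc : 0 ≤ c) (hc1 : c < 1)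
    (hφ : phiSpec d k c γ φ) {w x : Fin (d + 1) → ℝ} {y : ℝ} (hw : w ∈ Hset d)
    (hx : x ∈ Xset d c) (hy : y = 1 ∨ y = -1) :
    φ (y * dotp w x) =
      if y * dotp w x ≤ 0 then tailProb k γ (y * dotp w x)
      else if y * dotp w x ≤ γ then (γ - y * dotp w x) / γ * tailProb k γ 0 else 0 := by
  obtain ⟨h1, h2, h3⟩ := hφ
  have hzero : φ 0 = tailProb k γ 0 := by
    obtain ⟨x₀, hx₀, h0⟩ := exists_mem_Xset_dotp_eq le_rfl hc hc1.le hw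
    have e : 1 * dotp w x₀ = 0 := by rw [h0, mul_zero]
    have h := h1 w x₀ 1 hw hx₀ (Or.inl rfl) e.le
    rwa [measure_margin_of_mem hk hc hc1 hw hx₀ (Or.inl rfl) γ, e] at h
  split_ifs with ha hb
  · rw [h1 w x y hw hx hy ha, measure_margin_of_mem hk hc hc1 hw hx hy γ]
  · rw [h2 _ (not_le.1 ha) hb, hzero]
  · refine h3 _ (not_le.1 hb) ?_
    have h := abs_le.1 (abs_dotp_le hc hw hx)
    rcases hy with rfl | rfl <;> linarith

theorem rho_eq {d k : ℕ} {c γ : ℝ} {ρ : ℝ → ℝ} (hk : 0 < k) (hc : 0 ≤ c) (hc1 : c < 1)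
    (hγ : 0 ≤ γ) (hγc : γ ≤ c) (hρ : rhoSpec d k c γ ρ) {w x : Fin (d + 1) → ℝ} {y : ℝ}
    (hw : w ∈ Hset d) (hx : x ∈ Xset d c) (hy : y = 1 ∨ y = -1) :
    ρ (y * dotp w x) =
      if y * dotp w x ≤ 0 then 0
      else if y * dotp w x ≤ γ then y * dotp w x / γ * (1 - tailProb k γ γ)
      else 1 - tailProb k γ (y * dotp w x) := by
  obtain ⟨h1, h2, h3⟩ := hρ
  split_ifs with ha hb
  · refine h3 _ ?_ ha
    have h := abs_le.1 (abs_dotp_le hc hw hx)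
    rcases hy with rfl | rfl <;> linarith
  · obtain ⟨x₀, hx₀, h0⟩ := exists_mem_Xset_dotp_eq hγ hγc hc1.le hw
    have e : 1 * dotp w x₀ = γ := by rw [h0, one_mul]
    rw [h2 _ (not_le.1 ha) hb w x₀ 1 hw hx₀ (Or.inl rfl) e,
      measure_margin_le_of_mem hk hc hc1 hw hx₀ (Or.inl rfl) γ, e]
  · rw [h1 w x y hw hx hy (not_le.1 hb), measure_margin_le_of_mem hk hc hc1 hw hx hy γ]


theorem integrable_phi_margin {d k : ℕ} {c γ : ℝ} {φ : ℝ → ℝ} (hk : 0 < k) (hc : 0 ≤ c)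
    (hc1 : c < 1) (hγ : 0 < γ) (hφ : phiSpec d k c γ φ)
    {D : Measure ((Fin (d + 1) → ℝ) × ℝ)} [IsProbabilityMeasure D]
    (hD : ∀ᵐ q ∂D, q.1 ∈ Xset d c ∧ (q.2 = 1 ∨ q.2 = -1)) {w : Fin (d + 1) → ℝ}
    (hw : w ∈ Hset d) : Integrable (fun q => φ (q.2 * dotp w q.1)) D := by
  have hm := measurable_margin w
  have h1 : Integrable ({q | q.2 * dotp w q.1 ≤ 0}.indicator fun q =>
      (roundMeasure k (d + 1)
        {p | γ / 2 < q.2 * ∑ r, hRound p.1 p.2 w r * ∑ s, p.1 r s * q.1 s}).toReal) D :=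
    (integrable_measure_section (roundMeasure k (d + 1)) D (measurableSet_margin γ w)).indicator
      (measurableSet_le hm measurable_const)
  have h2 : Integrable ({q | 0 < q.2 * dotp w q.1 ∧ q.2 * dotp w q.1 ≤ γ}.indicator fun q =>
      (γ - q.2 * dotp w q.1) / γ * tailProb k γ 0) D := by
    refine Integrable.of_bound (C := 1) (Measurable.aestronglyMeasurable ?_)
      (Filter.Eventually.of_forall fun q => ?_)
    · exact Measurable.indicator (by fun_prop)
        ((measurableSet_lt measurable_const hm).inter (measurableSet_le hm measurable_const))
    · rw [Set.indicator_apply]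
      split_ifs with hq
      · have h0 := tailProb_nonneg k γ 0
        have h3 : 0 ≤ (γ - q.2 * dotp w q.1) / γ := div_nonneg (sub_nonneg.2 hq.2) hγ.le
        rw [Real.norm_of_nonneg (mul_nonneg h3 h0)]
        refine mul_le_one₀ ((div_le_one hγ).2 ?_) h0 (tailProb_le_one k γ 0)
        linarith [hq.1]
      · simp
  refine (h1.add h2).congr ?_
  filter_upwards [hD] with q hq
  rw [phi_eq hk hc hc1 hφ hw hq.1 hq.2, Pi.add_apply, Set.indicator_apply, Set.indicator_apply]
  simp only [Set.mem_ofPred_eq]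
  rw [measure_margin_of_mem hk hc hc1 hw hq.1 hq.2 γ]
  by_cases h0 : q.2 * dotp w q.1 ≤ 0
  · simp [h0, not_lt.2 h0]
  · simp [h0, not_le.1 h0]

/-- (Remark 3.9 of the paper.) The functions `φ` and `ρ` upper and
lower bound the four rounding-error probabilities. -/
theorem statement13 : ∃ cγ : ℝ, 0 < cγ ∧ cγ ≤ (Real.sqrt 2)⁻¹ ∧ ∃ k₀ : ℕ,
    ∀ (d n k : ℕ), 1 ≤ n → k₀ ≤ k →
    ∀ γi : ℝ, 0 < γi → γi ≤ cγ →
    ∀ D : Measure ((Fin (d+1) → ℝ) × ℝ), IsProbabilityMeasure D →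
    D {p | p.1 ∈ Xset d cγ ∧ (p.2 = 1 ∨ p.2 = -1)} = 1 →
    ∀ S : Fin n → (Fin (d+1) → ℝ) × ℝ,
      (∀ r, (S r).1 ∈ Xset d cγ ∧ ((S r).2 = 1 ∨ (S r).2 = -1)) →
    ∀ w, w ∈ Hset d →
    ∀ φ ρ : ℝ → ℝ, phiSpec d k cγ γi φ → rhoSpec d k cγ γi ρ →
    ∀ γ : ℝ, γi ≤ γ →
    ((∫ p, (D {q | γi / 2 < q.2 * ∑ r, hRound p.1 p.2 w r * ∑ s, p.1 r s * q.1 s ∧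
          q.2 * dotp w q.1 ≤ 0}).toReal ∂(roundMeasure k (d+1))) ≤
      ∫ q, φ (q.2 * dotp w q.1) ∂D) ∧
    ((∑ r, φ ((S r).2 * dotp w (S r).1)) / n ≤
      ∫ p, ((Nat.card {r : Fin n // γi / 2 <
          (S r).2 * ∑ u, hRound p.1 p.2 w u * ∑ s, p.1 u s * (S r).1 s ∧
          (S r).2 * dotp w (S r).1 ≤ γ} : ℝ) / n) ∂(roundMeasure k (d+1))) ∧
    ((∫ p, ((Nat.card {r : Fin n //
          (S r).2 * ∑ u, hRound p.1 p.2 w u * ∑ s, p.1 u s * (S r).1 s ≤ γi / 2 ∧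
          γ < (S r).2 * dotp w (S r).1} : ℝ) / n) ∂(roundMeasure k (d+1))) ≤
      (∑ r, ρ ((S r).2 * dotp w (S r).1)) / n) ∧
    ((∫ q, ρ (q.2 * dotp w q.1) ∂D) ≤
      ∫ p, (D {q | q.2 * ∑ r, hRound p.1 p.2 w r * ∑ s, p.1 r s * q.1 s ≤ γi / 2 ∧
          0 < q.2 * dotp w q.1}).toReal ∂(roundMeasure k (d+1))) := by
  have hpos : (0 : ℝ) < 1 / 100 := by norm_num
  have hlt : (1 / 100 : ℝ) < 1 := by norm_num
  refine ⟨1 / 100, hpos, ?_, 10, ?_⟩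
  · rw [le_inv_comm₀ hpos (by positivity)]
    exact Real.sqrt_le_iff.2 (by norm_num)
  intro d n k _ hk γi hγi hγc D hDp hD S hS w hw φ ρ hφ hρ γ hγ
  have hk0 : 0 < k := by omega
  have hm := measurable_margin w
  have hae : ∀ᵐ q ∂D, q.1 ∈ Xset d (1 / 100) ∧ (q.2 = 1 ∨ q.2 = -1) := by
    refine (mem_ae_iff_prob_eq_one ?_).2 hD
    exact (measurable_fst (measurableSet_Xset d _)).inter
      (measurable_snd ((measurableSet_singleton 1).union (measurableSet_singleton (-1))))
  have hmargin := measurableSet_margin (k := k) γi w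
  refine ⟨?_, ?_, ?_, ?_⟩
  · have hE := hmargin.inter ((measurableSet_le hm measurable_const).preimage measurable_snd :
      MeasurableSet {z : ((Fin k → Fin (d + 1) → ℝ) × (Fin k → ℝ)) × ((Fin (d + 1) → ℝ) × ℝ) |
        z.2.2 * dotp w z.2.1 ≤ 0})
    refine (integral_measure_section (roundMeasure k (d + 1)) D hE).trans_le ?_
    refine integral_mono_ae (integrable_measure_section _ D hE)
      (integrable_phi_margin hk0 hpos.le hlt hγi hφ hae hw) ?_
    filter_upwards [hae] with q hq
    rw [phi_eq hk0 hpos.le hlt hφ hw hq.1 hq.2]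
    split_ifs with h1 h2
    · rw [← measure_margin_of_mem hk0 hpos.le hlt hw hq.1 hq.2]
      exact ENNReal.toReal_mono (measure_ne_top _ _) (measure_mono fun p hp => hp.1)
    all_goals
      refine (le_of_eq ?_).trans (?_ : (0 : ℝ) ≤ _)
    · simp [h1]
    · exact mul_nonneg (div_nonneg (sub_nonneg.2 h2) hγi.le) (tailProb_nonneg _ _ _)
    · simp [h1]
    · exact le_rfl
  · rw [integral_card_div (roundMeasure k (d + 1))
      (fun r p => γi / 2 < (S r).2 * ∑ u, hRound p.1 p.2 w u * ∑ s, p.1 u s * (S r).1 s ∧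
        (S r).2 * dotp w (S r).1 ≤ γ)
      fun r => (measurableSet_margin_section γi _ w _).inter (MeasurableSet.const _)]
    gcongr with r
    rw [phi_eq hk0 hpos.le hlt hφ hw (hS r).1 (hS r).2]
    by_cases h : (S r).2 * dotp w (S r).1 ≤ γ
    · simp only [h, and_true]
      rw [measure_margin_of_mem hk0 hpos.le hlt hw (hS r).1 (hS r).2]
      split_ifs with h1 h2
      · exact le_rfl
      · exact interpolation_le_tailProb hk hγc (not_le.1 h1) h2
      · exact tailProb_nonneg _ _ _
    · rw [if_neg (by linarith), if_neg (by linarith)]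
      exact ENNReal.toReal_nonneg
  · rw [integral_card_div (roundMeasure k (d + 1))
      (fun r p => (S r).2 * ∑ u, hRound p.1 p.2 w u * ∑ s, p.1 u s * (S r).1 s ≤ γi / 2 ∧
        γ < (S r).2 * dotp w (S r).1)
      fun r => (measurableSet_margin_le_section γi _ w _).inter (MeasurableSet.const _)]
    gcongr with r
    rw [rho_eq hk0 hpos.le hlt hγi.le hγc hρ hw (hS r).1 (hS r).2]
    by_cases h : γ < (S r).2 * dotp w (S r).1
    · simp only [h, and_true]
      rw [measure_margin_le_of_mem hk0 hpos.le hlt hw (hS r).1 (hS r).2,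
        if_neg (by linarith), if_neg (by linarith)]
    · refine (le_of_eq ?_).trans (?_ : (0 : ℝ) ≤ _)
      · simp [h]
      · split_ifs with h1 h2
        · exact le_rfl
        · exact mul_nonneg (div_nonneg (not_le.1 h1).le hγi.le)
            (sub_nonneg.2 (tailProb_le_one _ _ _))
        · exact sub_nonneg.2 (tailProb_le_one _ _ _)
  · have hE := hmargin.compl.inter ((measurableSet_lt measurable_const hm).preimage measurable_snd :
      MeasurableSet {z : ((Fin k → Fin (d + 1) → ℝ) × (Fin k → ℝ)) × ((Fin (d + 1) → ℝ) × ℝ) |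
        0 < z.2.2 * dotp w z.2.1})
    have hswap := integral_measure_section (roundMeasure k (d + 1)) D hE
    have hint := integrable_measure_section (roundMeasure k (d + 1)) D hE
    simp only [Set.mem_inter_iff, Set.mem_compl_iff, Set.mem_preimage,
      Set.mem_ofPred_eq, not_lt] at hswap hint
    rw [hswap]
    refine integral_mono_of_nonneg ?_ hint ?_
    all_goals
      filter_upwards [hae] with q hq
      rw [rho_eq hk0 hpos.le hlt hγi.le hγc hρ hw hq.1 hq.2]
      split_ifs with h1 h2
    · exact le_rfl
    · exact mul_nonneg (div_nonneg (not_le.1 h1).le hγi.le) (sub_nonneg.2 (tailProb_le_one _ _ _))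
    · exact sub_nonneg.2 (tailProb_le_one _ _ _)
    · exact ENNReal.toReal_nonneg
    all_goals
      simp only [not_le.1 h1, and_true]
      rw [measure_margin_le_of_mem hk0 hpos.le hlt hw hq.1 hq.2]
    exact interpolation_le_one_sub_tailProb hk hγc (not_le.1 h1) h2
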